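/- (Consistency of sequential importance sampling.) Let (Ω, 𝓕, P) be a probability space, E a measurable space, and (Z_ℓ)_{ℓ∈ℕ} an i.i.d. sequence of E-valued random variables. Let g : E → ℝ be bounded and measurable and w : E → ℝ be measurable with w ≥ 0, w(Z₀) integrable, and E[w(Z₀)] > 0. Then, almost surely, (Σ_{ℓ=0}^{P−1} g(Z_ℓ)·w(Z_ℓ)) / (Σ_{ℓ=0}^{P−1} w(Z_ℓ)) → E[g(Z₀)·w(Z₀)] / E[w(Z₀)] as P → ∞. -/

import Mathlib

open MeasureTheory ProbabilityTheory Filter Topology Finset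

/-- Consistency of sequential importance sampling: for an i.i.d. sequence of particles
`Z_ℓ`, a bounded measurable test function `g` and a nonnegative measurable weight `w` with
`w(Z₀)` integrable and `E[w(Z₀)] > 0`, the self-normalized importance-sampling estimate
converges almost surely to `E[g(Z₀)w(Z₀)] / E[w(Z₀)]`. -/
theorem sis_consistency
    {Ω : Type*} {F : MeasurableSpace Ω} {μ : Measure Ω} [IsProbabilityMeasure μ]
    {E : Type*} {mE : MeasurableSpace E}
    (Z : ℕ → Ω → E) (hZ_meas : ∀ ℓ, Measurable (Z ℓ))
    (hZ_indep : iIndepFun (m := fun _ => mE) Z μ)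
    (hZ_ident : ∀ ℓ, IdentDistrib (Z ℓ) (Z 0) μ μ)
    (g : E → ℝ) (hg_meas : Measurable g) (hg_bdd : ∃ C, ∀ x, |g x| ≤ C)
    (w : E → ℝ) (hw_meas : Measurable w) (hw_nonneg : ∀ x, 0 ≤ w x)
    (hw_int : Integrable (fun ω => w (Z 0 ω)) μ)
    (hw_pos : 0 < ∫ ω, w (Z 0 ω) ∂μ) :
    ∀ᵐ ω ∂μ, Tendsto
      (fun P : ℕ => (∑ ℓ ∈ Finset.range P, g (Z ℓ ω) * w (Z ℓ ω))
          / (∑ ℓ ∈ Finset.range P, w (Z ℓ ω)))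
      atTop (𝓝 ((∫ ω', g (Z 0 ω') * w (Z 0 ω') ∂μ) / (∫ ω', w (Z 0 ω') ∂μ))) := by
  obtain ⟨C, hC⟩ := hg_bdd
  have key : ∀ f : E → ℝ, Measurable f → Integrable (fun ω => f (Z 0 ω)) μ →
      ∀ᵐ ω ∂μ, Tendsto (fun n : ℕ => (∑ i ∈ Finset.range n, f (Z i ω)) / n) atTop
        (𝓝 (∫ ω, f (Z 0 ω) ∂μ)) := by
    intro f hf hint
    exact strong_law_ae_real (fun i ω => f (Z i ω)) hint
      (fun i j hij => (hZ_indep.indepFun hij).comp hf hf)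
      (fun i => (hZ_ident i).comp hf)
  have hgw : Integrable (fun ω => g (Z 0 ω) * w (Z 0 ω)) μ :=
    hw_int.bdd_mul (c := C) (hg_meas.comp (hZ_meas 0)).aestronglyMeasurable
      (Eventually.of_forall fun ω => hC _)
  filter_upwards [key (fun x => g x * w x) (hg_meas.mul hw_meas) hgw, key w hw_meas hw_int]
    with ω h1 h2
  refine (h1.div h2 hw_pos.ne').congr' ?_
  filter_upwards [eventually_gt_atTop 0] with n hn
  have hn' : (n : ℝ) ≠ 0 := by positivity
  exact div_div_div_cancel_right₀ hn' _ _
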